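/- For every integer n ≥ 1 and all real numbers s, t, the polynomials x_n and y_n are invariant under rotation by 2π/n: x_n(ρ_{2π/n}(s,t)) = x_n(s,t) and y_n(ρ_{2π/n}(s,t)) = y_n(s,t). -/

import Mathlib

open Real

/-- `x_n(s,t) = ∑_{0 ≤ 2j ≤ n} (−1)^j · C(n,2j) · t^{2j} · s^{n−2j}`. -/
noncomputable def xPoly (n : ℕ) (s t : ℝ) : ℝ :=
  ∑ j ∈ Finset.range (n / 2 + 1), (-1 : ℝ) ^ j * (n.choose (2 * j) : ℝ) * t ^ (2 * j) * s ^ (n - 2 * j)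

/-- `y_n(s,t) = ∑_{0 ≤ 2j+1 ≤ n} (−1)^j · C(n,2j+1) · t^{2j+1} · s^{n−2j−1}`. -/
noncomputable def yPoly (n : ℕ) (s t : ℝ) : ℝ :=
  ∑ j ∈ Finset.range ((n + 1) / 2), (-1 : ℝ) ^ j * (n.choose (2 * j + 1) : ℝ) * t ^ (2 * j + 1) * s ^ (n - 2 * j - 1)

/-- The rotation `ρ_θ(s,t) = (s cos θ + t sin θ, −s sin θ + t cos θ)` of `ℝ²`. -/
noncomputable def rot (θ : ℝ) (p : ℝ × ℝ) : ℝ × ℝ :=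
  (p.1 * Real.cos θ + p.2 * Real.sin θ, -p.1 * Real.sin θ + p.2 * Real.cos θ)

/-!
Identify `ℝ²` with `ℂ` by `(s, t) ↦ s + i t`. The map `(x_n, y_n)` becomes `z ↦ z ^ n`, and the
rotation `ρ_θ` becomes multiplication by `exp (-i θ)`. Since
`(exp (-i θ) z) ^ n = exp (-i n θ) z ^ n`, the map `(x_n, y_n)` intertwines `ρ_θ` with `ρ_{nθ}`,
and `ρ_{2π}` is the identity.
-/

theorem sum_range_eq_sum_even_add_sum_odd {M : Type*} [AddCommMonoid M] (f : ℕ → M) (m : ℕ) :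
    ∑ k ∈ Finset.range m, f k =
      ∑ j ∈ Finset.range ((m + 1) / 2), f (2 * j) +
        ∑ j ∈ Finset.range (m / 2), f (2 * j + 1) := by
  induction m with
  | zero => simp
  | succ m ih =>
    rw [Finset.sum_range_succ, ih]
    obtain ⟨c, rfl | rfl⟩ := Nat.even_or_odd' m
    · rw [show (2 * c + 1 + 1) / 2 = c + 1 by lia, show (2 * c + 1) / 2 = c by lia,
        show 2 * c / 2 = c by lia, Finset.sum_range_succ (fun j => f (2 * j)), add_right_comm]
    · rw [show (2 * c + 1 + 1 + 1) / 2 = c + 1 by lia, show (2 * c + 1 + 1) / 2 = c + 1 by lia,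
        show (2 * c + 1) / 2 = c by lia, Finset.sum_range_succ (fun j => f (2 * j + 1)), add_assoc]

theorem xPoly_add_yPoly_mul_I (n : ℕ) (s t : ℝ) :
    (xPoly n s t + yPoly n s t * Complex.I : ℂ) = (s + t * Complex.I) ^ n := by
  have even_term (j : ℕ) : (t * Complex.I) ^ (2 * j) = (-1) ^ j * (t : ℂ) ^ (2 * j) := by
    rw [mul_pow, pow_mul Complex.I, Complex.I_sq, mul_comm]
  have odd_term (j : ℕ) :
      (t * Complex.I) ^ (2 * j + 1) = (-1) ^ j * (t : ℂ) ^ (2 * j + 1) * Complex.I := by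
    rw [pow_succ, even_term, pow_succ]
    ring
  rw [add_comm (s : ℂ), add_pow, sum_range_eq_sum_even_add_sum_odd,
    show (n + 1 + 1) / 2 = n / 2 + 1 by lia, xPoly, yPoly]
  push_cast
  rw [Finset.sum_mul]
  congr 1 <;> refine Finset.sum_congr rfl fun j _ => ?_
  · rw [even_term]
    ring
  · rw [odd_term, Nat.sub_sub]
    ring

theorem equivRealProd_symm_xPoly_yPoly (n : ℕ) (p : ℝ × ℝ) :
    Complex.equivRealProd.symm (xPoly n p.1 p.2, yPoly n p.1 p.2) =
      Complex.equivRealProd.symm p ^ n := by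
  simp only [Complex.equivRealProd_symm_apply, xPoly_add_yPoly_mul_I]

theorem equivRealProd_symm_rot (θ : ℝ) (p : ℝ × ℝ) :
    Complex.equivRealProd.symm (rot θ p) =
      Complex.exp (-(θ * Complex.I)) * Complex.equivRealProd.symm p := by
  rw [← neg_mul, Complex.exp_mul_I, Complex.cos_neg, Complex.sin_neg]
  simp only [Complex.equivRealProd_symm_apply, rot]
  push_cast
  linear_combination Complex.sin θ * p.2 * Complex.I_sq

theorem xPoly_yPoly_rot (n : ℕ) (θ : ℝ) (p : ℝ × ℝ) :
    (xPoly n (rot θ p).1 (rot θ p).2, yPoly n (rot θ p).1 (rot θ p).2) =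
      rot (n * θ) (xPoly n p.1 p.2, yPoly n p.1 p.2) := by
  apply Complex.equivRealProd.symm.injective
  calc
    Complex.equivRealProd.symm (xPoly n (rot θ p).1 (rot θ p).2, yPoly n (rot θ p).1 (rot θ p).2)
    _ = (Complex.exp (-(θ * Complex.I)) * Complex.equivRealProd.symm p) ^ n := by
      rw [equivRealProd_symm_xPoly_yPoly, equivRealProd_symm_rot]
    _ = Complex.exp (-((n * θ : ℝ) * Complex.I)) * Complex.equivRealProd.symm p ^ n := by
      rw [mul_pow, ← Complex.exp_nat_mul, mul_neg, ← mul_assoc, Complex.ofReal_mul,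
        Complex.ofReal_natCast]
    _ = Complex.equivRealProd.symm (rot (n * θ) (xPoly n p.1 p.2, yPoly n p.1 p.2)) := by
      rw [equivRealProd_symm_rot, equivRealProd_symm_xPoly_yPoly]

theorem rot_two_pi (p : ℝ × ℝ) : rot (2 * π) p = p := by
  simp [rot]

/-- `x_n` and `y_n` are invariant under rotation by `2π/n`. -/
theorem xPoly_yPoly_rot_invariant (n : ℕ) (hn : 1 ≤ n) (s t : ℝ) :
    xPoly n (rot (2 * π / n) (s, t)).1 (rot (2 * π / n) (s, t)).2 = xPoly n s t ∧
    yPoly n (rot (2 * π / n) (s, t)).1 (rot (2 * π / n) (s, t)).2 = yPoly n s t := by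
  have hn0 : (n : ℝ) ≠ 0 := Nat.cast_ne_zero.mpr (Nat.one_le_iff_ne_zero.mp hn)
  have hrot := xPoly_yPoly_rot n (2 * π / n) (s, t)
  rw [mul_div_cancel₀ _ hn0, rot_two_pi] at hrot
  exact Prod.mk.inj hrot
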